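/- arXiv:1201.3816 — 3 statements merged into one kernel-verified Lean document; each statement's English description precedes it below -/
import Mathlib

section
/- Let $*_\mu$ be the Kingman–Bessel convolution on $M^1([0,\infty))$ (defined on point measures by $(\delta_r *_\mu \delta_s)(f) = \frac{1}{\kappa_\mu}\int_{-1}^1 f(\sqrt{r^2+s^2+2rsv})(1-v^2)^{\mu-3/2}dv$ and extended bilinearly), and let $\bullet$ be the convolution with $(\delta_r \bullet \delta_s)(f) = f(\sqrt{r^2+s^2})$. Then there is a universal constant $C$ such that for all probability measures $\nu_1,\nu_2$ on $[0,\infty)$ with finite first moments $m_1(\nu_i) = \int_0^\infty x\,d\nu_i(x)$, all $\mu \ge 3$, and every root-Lipschitz function $f$ with constant $L$: $|\nu_1 *_\mu \nu_2(f) - \nu_1 \bullet \nu_2(f)| \le C L\, m_1(\nu_1)\,m_1(\nu_2)/\sqrt{\mu}$. -/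
open MeasureTheory Filter ProbabilityTheory

/-- The Kingman–Bessel normalization constant `κ_μ = ∫_{-1}^1 (1-v²)^{μ-3/2} dv`. -/
noncomputable def kappa (μ : ℝ) : ℝ := ∫ v in Set.Icc (-1 : ℝ) 1, (1 - v ^ 2) ^ (μ - 3 / 2)

/-- The Kingman–Bessel convolution of two point measures `δ_r *_μ δ_s`:
`(δ_r *_μ δ_s)(f) = κ_μ⁻¹ ∫_{-1}^1 f(√(r²+s²+2rsv)) (1-v²)^{μ-3/2} dv`. -/
noncomputable def kingmanKernel (μ r s : ℝ) : Measure ℝ :=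
  (ENNReal.ofReal (kappa μ))⁻¹ •
    Measure.map (fun v => Real.sqrt (r ^ 2 + s ^ 2 + 2 * r * s * v))
      ((volume.restrict (Set.Icc (-1 : ℝ) 1)).withDensity
        fun v => ENNReal.ofReal ((1 - v ^ 2) ^ (μ - 3 / 2)))

/-- The Kingman–Bessel convolution of two measures on `[0,∞)`. -/
noncomputable def kingmanConv (μ : ℝ) (ν₁ ν₂ : Measure ℝ) : Measure ℝ :=
  ν₁.bind fun r => ν₂.bind fun s => kingmanKernel μ r s

/-- The degenerate convolution `•` with `(δ_r • δ_s)(f) = f(√(r²+s²))`. -/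
noncomputable def bulletConv (ν₁ ν₂ : Measure ℝ) : Measure ℝ :=
  Measure.map (fun p : ℝ × ℝ => Real.sqrt (p.1 ^ 2 + p.2 ^ 2)) (ν₁.prod ν₂)

/-- `n`-fold Kingman–Bessel convolution power `ν^{(n,*_μ)}`. -/
noncomputable def kingmanPow (μ : ℝ) (ν : Measure ℝ) : ℕ → Measure ℝ
  | 0 => Measure.dirac 0
  | n + 1 => kingmanConv μ ν (kingmanPow μ ν n)

/-- `n`-fold `•`-convolution power `ν^{(n,•)}`. -/
noncomputable def bulletPow (ν : Measure ℝ) : ℕ → Measure ℝ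
  | 0 => Measure.dirac 0
  | n + 1 => bulletConv ν (bulletPow ν n)


noncomputable def kbRho (μ : ℝ) : Measure ℝ :=
  (ENNReal.ofReal (kappa μ))⁻¹ • ((volume.restrict (Set.Icc (-1 : ℝ) 1)).withDensity
        fun v => ENNReal.ofReal ((1 - v ^ 2) ^ (μ - 3 / 2)))

lemma kb_cont (a : ℝ) (ha : 0 ≤ a) : Continuous fun v : ℝ => (1 - v ^ 2) ^ a :=
  Continuous.rpow_const (by fun_prop) (fun _ => Or.inr ha)

lemma kb_int (g : ℝ → ℝ) (hg : Continuous g) : IntegrableOn g (Set.Icc (-1 : ℝ) 1) :=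
  hg.continuousOn.integrableOn_compact isCompact_Icc

lemma kb_nonneg (a v : ℝ) (hv : v ∈ Set.Icc (-1 : ℝ) 1) : 0 ≤ (1 - v ^ 2) ^ a :=
  Real.rpow_nonneg (by nlinarith [hv.1, hv.2]) _

lemma kb_pos (μ : ℝ) (hμ : 3 ≤ μ) : 0 < kappa μ := by
  unfold kappa
  rw [integral_Icc_eq_integral_Ioc, ← intervalIntegral.integral_of_le (by norm_num)]
  apply intervalIntegral.intervalIntegral_pos_of_pos_on
  · exact (kb_cont _ (by linarith)).intervalIntegrable _ _
  · intro x hx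
    exact Real.rpow_pos_of_pos (by nlinarith [hx.1, hx.2]) _
  · norm_num

lemma kb_second (μ : ℝ) (hμ : 3 ≤ μ) :
    μ * ∫ v in Set.Icc (-1 : ℝ) 1, v ^ 2 * (1 - v ^ 2) ^ (μ - 3 / 2) ≤ kappa μ := by
  set a := μ - 3 / 2 with ha
  have c1 := kb_cont a (by linarith)
  have c2 := kb_cont (a + 1) (by linarith)
  have hd : ∀ x ∈ Set.uIcc (-1 : ℝ) 1, HasDerivAt (fun v : ℝ => v * (1 - v ^ 2) ^ (a + 1))
      ((1 - x ^ 2) ^ (a + 1) - 2 * (a + 1) * (x ^ 2 * (1 - x ^ 2) ^ a)) x := by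
    intro x _
    have h1 : HasDerivAt (fun v : ℝ => 1 - v ^ 2) (-(2 * x)) x := by
      simpa using (hasDerivAt_pow 2 x).const_sub 1
    have h2 := (hasDerivAt_id x).mul (h1.rpow_const (p := a + 1) (Or.inr (by linarith)))
    refine HasDerivAt.congr_deriv (f := fun v : ℝ => v * (1 - v ^ 2) ^ (a + 1)) h2 ?_
    simp only [id, add_sub_cancel_right]
    ring
  have key := intervalIntegral.integral_eq_sub_of_hasDerivAt hd
    (Continuous.intervalIntegrable (by fun_prop) _ _)
  have hz : (0 : ℝ) ^ (a + 1) = 0 := Real.zero_rpow (by linarith)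
  norm_num [hz] at key
  rw [intervalIntegral.integral_of_le (by norm_num), ← integral_Icc_eq_integral_Ioc,
    integral_sub (kb_int _ c2) (kb_int _ (by fun_prop)), integral_const_mul] at key
  have hle : ∫ v in Set.Icc (-1 : ℝ) 1, (1 - v ^ 2) ^ (a + 1) ≤ kappa μ := by
    apply setIntegral_mono_on (kb_int _ c2) (kb_int _ c1) measurableSet_Icc
    intro v hv
    have h0 : 0 ≤ 1 - v ^ 2 := by nlinarith [hv.1, hv.2]
    rw [Real.rpow_add_one' h0 (by linarith)]
    have := kb_nonneg a v hv
    nlinarith [sq_nonneg v]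
  have hn : 0 ≤ ∫ v in Set.Icc (-1 : ℝ) 1, v ^ 2 * (1 - v ^ 2) ^ a :=
    setIntegral_nonneg measurableSet_Icc fun v hv => mul_nonneg (sq_nonneg _) (kb_nonneg a v hv)
  nlinarith

lemma kb_prob (μ : ℝ) (hμ : 3 ≤ μ) : IsProbabilityMeasure (kbRho μ) := by
  constructor
  have hk := kb_pos μ hμ
  have : ((volume.restrict (Set.Icc (-1 : ℝ) 1)).withDensity
        fun v => ENNReal.ofReal ((1 - v ^ 2) ^ (μ - 3 / 2))) Set.univ
        = ENNReal.ofReal (kappa μ) := by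
    rw [withDensity_apply _ MeasurableSet.univ, Measure.restrict_univ, kappa,
      ofReal_integral_eq_lintegral_ofReal (kb_int _ (kb_cont _ (by linarith)))]
    exact (ae_restrict_iff' measurableSet_Icc).2 (ae_of_all _ fun v hv => kb_nonneg _ v hv)
  rw [kbRho, Measure.smul_apply, this, smul_eq_mul]
  exact ENNReal.inv_mul_cancel (by simpa using hk) ENNReal.ofReal_ne_top

lemma kb_ae (μ : ℝ) : ∀ᵐ v ∂(kbRho μ), v ∈ Set.Icc (-1 : ℝ) 1 := by
  apply Measure.ae_smul_measure
  exact (withDensity_absolutelyContinuous _ _).ae_le (ae_restrict_mem measurableSet_Icc)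

lemma kb_integral (μ : ℝ) (hμ : 3 ≤ μ) (g : ℝ → ℝ) :
    ∫ v, g v ∂(kbRho μ)
      = (kappa μ)⁻¹ * ∫ v in Set.Icc (-1 : ℝ) 1, (1 - v ^ 2) ^ (μ - 3 / 2) * g v := by
  have hk := kb_pos μ hμ
  have hm : Measurable fun v : ℝ => ENNReal.ofReal ((1 - v ^ 2) ^ (μ - 3 / 2)) :=
    (kb_cont _ (by linarith)).measurable.ennreal_ofReal
  rw [kbRho, integral_smul_measure, integral_withDensity_eq_integral_toReal_smul hm
    (ae_of_all _ fun _ => ENNReal.ofReal_lt_top), ENNReal.toReal_inv, ENNReal.toReal_ofReal hk.le,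
    smul_eq_mul]
  congr 1
  apply setIntegral_congr_fun measurableSet_Icc
  intro v hv
  simp only [smul_eq_mul, ENNReal.toReal_ofReal (kb_nonneg _ v hv)]

lemma kb_first (μ : ℝ) (hμ : 3 ≤ μ) : ∫ v, |v| ∂(kbRho μ) ≤ 1 / Real.sqrt μ := by
  have hk := kb_pos μ hμ
  have h2 := kb_second μ hμ
  have hs : 0 < Real.sqrt μ := Real.sqrt_pos.2 (by linarith)
  have hss : Real.sqrt μ * Real.sqrt μ = μ := Real.mul_self_sqrt (by linarith)
  have c := kb_cont (μ - 3 / 2) (by linarith)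
  rw [kb_integral μ hμ, inv_mul_le_iff₀ hk]
  have h3 : ∫ v in Set.Icc (-1 : ℝ) 1, (1 - v ^ 2) ^ (μ - 3 / 2) * |v| ≤
      ∫ v in Set.Icc (-1 : ℝ) 1, (Real.sqrt μ / 2 * (v ^ 2 * (1 - v ^ 2) ^ (μ - 3 / 2)) +
        1 / (2 * Real.sqrt μ) * (1 - v ^ 2) ^ (μ - 3 / 2)) := by
    apply setIntegral_mono_on (kb_int _ (by fun_prop)) (kb_int _ (by fun_prop)) measurableSet_Icc
    intro v hv
    have h0 := kb_nonneg (μ - 3 / 2) v hv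
    have : |v| ≤ Real.sqrt μ / 2 * v ^ 2 + 1 / (2 * Real.sqrt μ) := by
      rw [← sub_nonneg]
      have : Real.sqrt μ / 2 * v ^ 2 + 1 / (2 * Real.sqrt μ) - |v|
        = (Real.sqrt μ * |v| - 1) ^ 2 / (2 * Real.sqrt μ) := by
        rw [← sq_abs v]; field_simp; ring
      rw [this]; positivity
    nlinarith [mul_le_mul_of_nonneg_left this h0]
  refine h3.trans ?_
  rw [integral_add (kb_int _ (by fun_prop)) (kb_int _ (by fun_prop)), integral_const_mul,
    integral_const_mul]
  change _ + 1 / (2 * Real.sqrt μ) * kappa μ ≤ _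
  have h4 : Real.sqrt μ / 2 * ∫ v in Set.Icc (-1 : ℝ) 1, v ^ 2 * (1 - v ^ 2) ^ (μ - 3 / 2)
      = 1 / (2 * Real.sqrt μ) *
        (μ * ∫ v in Set.Icc (-1 : ℝ) 1, v ^ 2 * (1 - v ^ 2) ^ (μ - 3 / 2)) := by
    have : Real.sqrt μ / 2 = 1 / (2 * Real.sqrt μ) * μ := by
      field_simp; rw [sq]; linarith
    rw [this, mul_assoc]
  rw [h4]
  have := mul_le_mul_of_nonneg_left h2 (show 0 ≤ 1 / (2 * Real.sqrt μ) by positivity)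
  have e : kappa μ * (1 / Real.sqrt μ) = 1 / (2 * Real.sqrt μ) * kappa μ
    + 1 / (2 * Real.sqrt μ) * kappa μ := by field_simp; ring
  linarith

lemma kb_kernel (μ r s : ℝ) : kingmanKernel μ r s
    = (kbRho μ).map (fun v => Real.sqrt (r ^ 2 + s ^ 2 + 2 * r * s * v)) := by
  rw [kingmanKernel, kbRho, Measure.map_smul]

lemma kb_conv (μ : ℝ) (hμ : 3 ≤ μ) (ν₁ ν₂ : Measure ℝ) [IsProbabilityMeasure ν₁]
    [IsProbabilityMeasure ν₂] : kingmanConv μ ν₁ ν₂ =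
    (ν₁.prod (ν₂.prod (kbRho μ))).map
      (fun p => Real.sqrt (p.1 ^ 2 + p.2.1 ^ 2 + 2 * p.1 * p.2.1 * p.2.2)) := by
  have := kb_prob μ hμ
  have hH : Measurable (fun p : ℝ × ℝ × ℝ =>
    Real.sqrt (p.1 ^ 2 + p.2.1 ^ 2 + 2 * p.1 * p.2.1 * p.2.2)) := by fun_prop
  have hr : ∀ r : ℝ, Measurable (fun p : ℝ × ℝ =>
    Real.sqrt (r ^ 2 + p.1 ^ 2 + 2 * r * p.1 * p.2)) := fun r => by fun_prop
  have hin : ∀ r, (ν₂.bind fun s => kingmanKernel μ r s) = (ν₂.prod (kbRho μ)).map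
      (fun p => Real.sqrt (r ^ 2 + p.1 ^ 2 + 2 * r * p.1 * p.2)) := by
    intro r
    ext t ht
    have hk : ∀ t, MeasurableSet t → ∀ s, kingmanKernel μ r s t = kbRho μ (Prod.mk s ⁻¹'
        ((fun p : ℝ × ℝ => Real.sqrt (r ^ 2 + p.1 ^ 2 + 2 * r * p.1 * p.2)) ⁻¹' t)) := by
      intro t ht s
      rw [kb_kernel, Measure.map_apply (by fun_prop) ht]; rfl
    rw [Measure.bind_apply ht, Measure.map_apply (hr r) ht, Measure.prod_apply (hr r ht)]
    · simp_rw [hk t ht]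
    · apply Measurable.aemeasurable
      apply Measure.measurable_of_measurable_coe
      intro u hu
      simp_rw [hk u hu]
      exact measurable_measure_prodMk_left (hr r hu)
  unfold kingmanConv
  simp_rw [hin]
  ext t ht
  have hk : ∀ r, (ν₂.prod (kbRho μ)).map
      (fun p => Real.sqrt (r ^ 2 + p.1 ^ 2 + 2 * r * p.1 * p.2)) t
      = (ν₂.prod (kbRho μ)) (Prod.mk r ⁻¹' ((fun p : ℝ × ℝ × ℝ =>
        Real.sqrt (p.1 ^ 2 + p.2.1 ^ 2 + 2 * p.1 * p.2.1 * p.2.2)) ⁻¹' t)) := by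
    intro r
    rw [Measure.map_apply (hr r) ht]; rfl
  rw [Measure.bind_apply ht, Measure.map_apply hH ht, Measure.prod_apply (hH ht)]
  · simp_rw [hk]
  · apply Measurable.aemeasurable
    apply Measure.measurable_of_measurable_coe
    intro u hu
    simp_rw [Measure.map_apply (hr _) hu]
    exact measurable_measure_prodMk_left (hH hu)

lemma kb_bullet (μ : ℝ) (hμ : 3 ≤ μ) (ν₁ ν₂ : Measure ℝ) [IsProbabilityMeasure ν₁]
    [IsProbabilityMeasure ν₂] : bulletConv ν₁ ν₂ =
    (ν₁.prod (ν₂.prod (kbRho μ))).map (fun p => Real.sqrt (p.1 ^ 2 + p.2.1 ^ 2)) := by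
  have := kb_prob μ hμ
  have h : ν₁.prod ν₂ = (ν₁.prod (ν₂.prod (kbRho μ))).map (Prod.map id Prod.fst) := by
    rw [← Measure.map_prod_map _ _ measurable_id measurable_fst, Measure.map_id,
      Measure.map_fst_prod]
    simp
  rw [bulletConv, h, Measure.map_map (by fun_prop) (by fun_prop)]
  rfl

/-- Comparison of the Kingman–Bessel convolution with the `•`-convolution:
`|ν₁ *_μ ν₂(f) - ν₁ • ν₂(f)| ≤ C L m₁(ν₁) m₁(ν₂) / √μ` for root-Lipschitz `f`. -/
theorem conv_comparison :
    ∃ C > (0 : ℝ), ∀ μ : ℝ, μ ≥ 3 →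
      ∀ ν₁ ν₂ : Measure ℝ, IsProbabilityMeasure ν₁ → IsProbabilityMeasure ν₂ →
        ν₁ (Set.Iio 0) = 0 → ν₂ (Set.Iio 0) = 0 →
        Integrable (fun x => x) ν₁ → Integrable (fun x => x) ν₂ →
        ∀ (f : ℝ → ℝ) (L : ℝ), Measurable f →
          (∀ x y : ℝ, 0 ≤ x → 0 ≤ y →
            |f (Real.sqrt x) - f (Real.sqrt y)| ≤ L * |x - y|) →
          |(∫ x, f x ∂(kingmanConv μ ν₁ ν₂)) - ∫ x, f x ∂(bulletConv ν₁ ν₂)|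
            ≤ C * L * (∫ x, x ∂ν₁) * (∫ x, x ∂ν₂) / Real.sqrt μ := by
  refine ⟨2, by norm_num, ?_⟩
  intro μ hμ ν₁ ν₂ _ _ hn₁ hn₂ hi₁ hi₂ f L hf hL
  have := kb_prob μ hμ
  have hL0 : 0 ≤ L := by
    have := (abs_nonneg _).trans (hL 0 1 le_rfl zero_le_one)
    simpa using this
  have ha₁ : ∫ x, |x| ∂ν₁ = ∫ x, x ∂ν₁ := by
    apply integral_congr_ae
    have : ∀ᵐ x ∂ν₁, x ∉ Set.Iio (0 : ℝ) := measure_eq_zero_iff_ae_notMem.1 hn₁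
    filter_upwards [this] with x hx
    exact abs_of_nonneg (not_lt.1 hx)
  have ha₂ : ∫ x, |x| ∂ν₂ = ∫ x, x ∂ν₂ := by
    apply integral_congr_ae
    have : ∀ᵐ x ∂ν₂, x ∉ Set.Iio (0 : ℝ) := measure_eq_zero_iff_ae_notMem.1 hn₂
    filter_upwards [this] with x hx
    exact abs_of_nonneg (not_lt.1 hx)
  have hp₁ : 0 ≤ ∫ x, x ∂ν₁ := ha₁ ▸ integral_nonneg fun x => abs_nonneg x
  have hp₂ : 0 ≤ ∫ x, x ∂ν₂ := ha₂ ▸ integral_nonneg fun x => abs_nonneg x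
  rw [kb_conv μ hμ, kb_bullet μ hμ ν₁ ν₂,
    integral_map (by fun_prop) hf.aestronglyMeasurable,
    integral_map (by fun_prop) hf.aestronglyMeasurable]
  set P := ν₁.prod (ν₂.prod (kbRho μ)) with hP
  set F : ℝ × ℝ × ℝ → ℝ := fun p =>
    f (Real.sqrt (p.1 ^ 2 + p.2.1 ^ 2 + 2 * p.1 * p.2.1 * p.2.2)) with hF
  set G : ℝ × ℝ × ℝ → ℝ := fun p => f (Real.sqrt (p.1 ^ 2 + p.2.1 ^ 2)) with hG
  have mF : Measurable F := hf.comp (by fun_prop)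
  have mG : Measurable G := hf.comp (by fun_prop)
  have hv : Integrable (fun v : ℝ => |v|) (kbRho μ) := by
    refine Integrable.of_bound (by fun_prop) 1 ?_
    filter_upwards [kb_ae μ] with v hv
    simpa using abs_le.2 hv
  have hB : Integrable (fun p : ℝ × ℝ × ℝ => (2 * L) * (|p.1| * (|p.2.1| * |p.2.2|))) P :=
    (hi₁.abs.mul_prod (hi₂.abs.mul_prod hv)).const_mul _
  have hae : ∀ᵐ p ∂P, p.2.2 ∈ Set.Icc (-1 : ℝ) 1 :=
    Measure.quasiMeasurePreserving_snd.ae (Measure.quasiMeasurePreserving_snd.ae (kb_ae μ))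
  have hbd : ∀ᵐ p ∂P, ‖F p - G p‖ ≤ (2 * L) * (|p.1| * (|p.2.1| * |p.2.2|)) := by
    filter_upwards [hae] with p hp
    obtain ⟨r, s, v⟩ := p
    simp only [hF, hG, Real.norm_eq_abs] at hp ⊢
    refine (hL _ _ ?_ (by positivity)).trans (le_of_eq ?_)
    · nlinarith [mul_nonneg (sub_nonneg.2 hp.2) (sq_nonneg (r - s)),
        mul_nonneg (by linarith [hp.1] : 0 ≤ 1 + v) (sq_nonneg (r + s))]
    · rw [add_sub_cancel_left, abs_mul, abs_mul, abs_mul, abs_two]; ring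
  have hD : Integrable (fun p => F p - G p) P :=
    hB.mono' (mF.sub mG).aestronglyMeasurable hbd
  have hR : (2 * L) * ((∫ x, x ∂ν₁) * ((∫ x, x ∂ν₂) * (1 / Real.sqrt μ)))
      = 2 * L * (∫ x, x ∂ν₁) * (∫ x, x ∂ν₂) / Real.sqrt μ := by ring
  rw [← hR]
  by_cases hGi : Integrable G P
  · have hFi : Integrable F P := by
      refine (hD.add hGi).congr (ae_of_all _ fun p => ?_)
      simp
    rw [← integral_sub hFi hGi]
    refine (norm_integral_le_of_norm_le hB hbd).trans ?_
    rw [integral_const_mul, hP,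
      integral_prod_mul (fun x : ℝ => |x|) (fun q : ℝ × ℝ => |q.1| * |q.2|),
      integral_prod_mul (fun x : ℝ => |x|) (fun x : ℝ => |x|), ha₁, ha₂]
    have := kb_first μ hμ
    gcongr
  · have hFi : ¬ Integrable F P := by
      intro h
      refine hGi ((h.sub hD).congr (ae_of_all _ fun p => ?_))
      simp
    rw [integral_undef hGi, integral_undef hFi, sub_zero, abs_zero]
    positivity
end

section
/- Let $\nu$ be a probability measure on $[0,\infty)$ with finite fourth moment, $\sigma^2 = \int x^2 d\nu$, and let $(\mu_n)$ satisfy $n^2/\mu_n \to 0$. Let $(S_n^{\mu_n})$ be the Kingman random walk of index $\mu_n$ with step law $\nu$, i.e. the Markov chain on $[0,\infty)$ with $S_0 = 0$ and transition kernel $P(S_{n+1} \in A \mid S_n = x) = (\delta_x *_{\mu_n} \nu)(A)$. Then $((S_n^{\mu_n})^2 - n\sigma^2)/\sqrt{n}$ converges in distribution to $N(0, m_4(\nu) - \sigma^4)$. -/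
open MeasureTheory Filter ProbabilityTheory

noncomputable def bet (μ : ℝ) : Measure ℝ :=
  (ENNReal.ofReal (kappa μ))⁻¹ •
      ((volume.restrict (Set.Icc (-1 : ℝ) 1)).withDensity
        fun v => ENNReal.ofReal ((1 - v ^ 2) ^ (μ - 3 / 2)))

lemma w_cont {μ : ℝ} (hμ : 2 ≤ μ) : Continuous fun v : ℝ => (1 - v ^ 2) ^ (μ - 3 / 2) :=
  (by fun_prop : Continuous fun v : ℝ => 1 - v ^ 2).rpow_const fun v => Or.inr (by linarith)

lemma Icc_int (f : ℝ → ℝ) : ∫ v in Set.Icc (-1 : ℝ) 1, f v = ∫ v in (-1 : ℝ)..1, f v := by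
  rw [integral_Icc_eq_integral_Ioc, intervalIntegral.integral_of_le (by norm_num)]

lemma kappa_pos {μ : ℝ} (hμ : 2 ≤ μ) : 0 < kappa μ := by
  unfold kappa
  rw [Icc_int]
  apply intervalIntegral.intervalIntegral_pos_of_pos_on
  · exact (w_cont hμ).intervalIntegrable _ _
  · intro x hx
    exact Real.rpow_pos_of_pos (by nlinarith [hx.1, hx.2]) _
  · norm_num

lemma w_nonneg (μ : ℝ) : 0 ≤ᵐ[volume.restrict (Set.Icc (-1 : ℝ) 1)]
    fun v : ℝ => (1 - v ^ 2) ^ (μ - 3 / 2) := by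
  filter_upwards [ae_restrict_mem measurableSet_Icc] with x hx
  exact Real.rpow_nonneg (by nlinarith [hx.1, hx.2]) _

lemma bet_prob {μ : ℝ} (hμ : 2 ≤ μ) : IsProbabilityMeasure (bet μ) := by
  constructor
  have h := ofReal_integral_eq_lintegral_ofReal
    ((w_cont hμ).integrableOn_Icc (a := -1) (b := 1) (μ := volume)) (w_nonneg μ)
  unfold bet
  rw [Measure.smul_apply, withDensity_apply _ MeasurableSet.univ, Measure.restrict_univ, ← h]
  change (ENNReal.ofReal (kappa μ))⁻¹ * ENNReal.ofReal (kappa μ) = 1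
  exact ENNReal.inv_mul_cancel (by simpa using kappa_pos hμ) ENNReal.ofReal_ne_top

lemma bet_ae (μ : ℝ) : ∀ᵐ v ∂(bet μ), v ∈ Set.Icc (-1 : ℝ) 1 := by
  unfold bet
  apply Measure.ae_smul_measure
  exact (withDensity_absolutelyContinuous _ _).ae_le (ae_restrict_mem measurableSet_Icc)

lemma bet_integral {μ : ℝ} (hμ : 2 ≤ μ) (f : ℝ → ℝ) :
    ∫ v, f v ∂(bet μ) = (kappa μ)⁻¹ * ∫ v in (-1 : ℝ)..1, (1 - v ^ 2) ^ (μ - 3 / 2) * f v := by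
  unfold bet
  rw [integral_smul_measure, integral_withDensity_eq_integral_toReal_smul₀]
  · rw [← Icc_int, ENNReal.toReal_inv, ENNReal.toReal_ofReal (kappa_pos hμ).le, smul_eq_mul]
    congr 1
    apply integral_congr_ae
    filter_upwards [w_nonneg μ] with x hx
    rw [ENNReal.toReal_ofReal hx, smul_eq_mul]
  · exact (w_cont hμ).measurable.ennreal_ofReal.aemeasurable
  · simp

lemma bet_mean {μ : ℝ} (hμ : 2 ≤ μ) : ∫ v, v ∂(bet μ) = 0 := by
  rw [bet_integral hμ]
  have h := intervalIntegral.integral_comp_neg (a := -1) (b := 1)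
    (fun v : ℝ => (1 - v ^ 2) ^ (μ - 3 / 2) * v)
  simp only [neg_neg, neg_sq, mul_neg, intervalIntegral.integral_neg] at h
  have : (∫ v in (-1 : ℝ)..1, (1 - v ^ 2) ^ (μ - 3 / 2) * v) = 0 := by linarith
  rw [this, mul_zero]

lemma bet_sq {μ : ℝ} (hμ : 2 ≤ μ) : ∫ v, v ^ 2 ∂(bet μ) = 1 / (2 * μ) := by
  rw [bet_integral hμ]
  have hc := w_cont hμ
  have h := intervalIntegral.integral_eq_sub_of_hasDerivAt_of_le (a := -1) (b := 1)
    (f := fun v : ℝ => v * (1 - v ^ 2) ^ (μ - 1 / 2))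
    (f' := fun v : ℝ => (1 - v ^ 2) ^ (μ - 3 / 2) - 2 * μ * ((1 - v ^ 2) ^ (μ - 3 / 2) * v ^ 2))
    (by norm_num) ?_ ?_ ?_
  · rw [intervalIntegral.integral_sub (hc.intervalIntegrable _ _)
      ((by fun_prop : Continuous _).intervalIntegrable _ _),
      intervalIntegral.integral_const_mul, ← Icc_int (fun v => (1 - v ^ 2) ^ (μ - 3 / 2))] at h
    change kappa μ - _ = _ at h
    have h0 : (0 : ℝ) ^ (μ - 1 / 2) = 0 := Real.zero_rpow (by linarith)
    norm_num at h
    have h0 : (0 : ℝ) ^ (μ - 1 / 2) = 0 := Real.zero_rpow (by linarith)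
    rw [h0] at h
    have hk := kappa_pos hμ
    have : μ ≠ 0 := by linarith
    generalize (∫ x in (-1 : ℝ)..1, (1 - x ^ 2) ^ (μ - 3 / 2) * x ^ 2) = J at h ⊢
    field_simp
    linarith
  · apply Continuous.continuousOn
    apply continuous_id.mul
    exact (by fun_prop : Continuous fun v : ℝ => 1 - v ^ 2).rpow_const
      fun v => Or.inr (by linarith)
  · intro x hx
    have hp : 0 < 1 - x ^ 2 := by nlinarith [hx.1, hx.2]
    have h1 : HasDerivAt (fun v : ℝ => 1 - v ^ 2) (-(2 * x)) x := by
      simpa using (hasDerivAt_pow 2 x).const_sub 1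
    have h2 := (hasDerivAt_id x).mul (h1.rpow_const (p := μ - 1 / 2) (Or.inl hp.ne'))
    refine h2.congr_deriv ?_
    have e : (1 - x ^ 2) ^ (μ - 1 / 2) = (1 - x ^ 2) ^ (μ - 3 / 2) * (1 - x ^ 2) := by
      rw [← Real.rpow_add_one hp.ne']; congr 1; ring
    have e2 : μ - 1 / 2 - 1 = μ - 3 / 2 := by ring
    rw [e2, e]
    simp only [id]
    ring
  · exact (by fun_prop : Continuous _).intervalIntegrable _ _

noncomputable def kf (p : ℝ × ℝ × ℝ) : ℝ :=
  Real.sqrt (p.1 ^ 2 + p.2.1 ^ 2 + 2 * p.1 * p.2.1 * p.2.2)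

lemma kf_meas : Measurable kf := by unfold kf; fun_prop

lemma kernel_eq (μ r s : ℝ) : kingmanKernel μ r s = (bet μ).map (fun v => kf (r, s, v)) := by
  unfold kingmanKernel bet kf
  rw [Measure.map_smul]

lemma conv_eq {μ : ℝ} (hμ : 2 ≤ μ) (ν₁ ν₂ : Measure ℝ) [SFinite ν₁] [SFinite ν₂] :
    kingmanConv μ ν₁ ν₂ = (ν₁.prod (ν₂.prod (bet μ))).map kf := by
  have := bet_prob hμ
  have hm := kf_meas
  have hin (r : ℝ) : Measurable fun s => kingmanKernel μ r s := by
    apply Measure.measurable_of_measurable_coe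
    intro A hA
    simp_rw [kernel_eq]
    have : ∀ s, (Measure.map (fun v => kf (r, s, v)) (bet μ)) A =
        bet μ (Prod.mk s ⁻¹' ((fun q : ℝ × ℝ => kf (r, q)) ⁻¹' A)) := fun s => by
      rw [Measure.map_apply (by fun_prop) hA]; rfl
    simp_rw [this]
    exact measurable_measure_prodMk_left ((by fun_prop : Measurable _) hA)
  have hb (r : ℝ) (A : Set ℝ) (hA : MeasurableSet A) :
      (ν₂.bind fun s => kingmanKernel μ r s) A = (ν₂.prod (bet μ)) (Prod.mk r ⁻¹' (kf ⁻¹' A)) := by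
    rw [Measure.bind_apply hA (hin r).aemeasurable, Measure.prod_apply]
    · apply lintegral_congr
      intro s
      rw [kernel_eq, Measure.map_apply (by fun_prop) hA]; rfl
    · exact measurable_prodMk_left (hm hA)
  have hout : Measurable fun r => ν₂.bind fun s => kingmanKernel μ r s := by
    apply Measure.measurable_of_measurable_coe
    intro A hA
    simp_rw [hb _ A hA]
    exact measurable_measure_prodMk_left (hm hA)
  ext A hA
  unfold kingmanConv
  rw [Measure.bind_apply hA hout.aemeasurable, Measure.map_apply hm hA,
    Measure.prod_apply (hm hA)]
  exact lintegral_congr fun r => hb r A hA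

lemma exp_bd (x : ℝ) : ‖Complex.exp (x * Complex.I) - 1 - x * Complex.I‖ ≤ 2 * x ^ 2 := by
  have hn : ‖(x : ℂ) * Complex.I‖ = |x| := by simp
  rcases le_total |x| 1 with h | h
  · have := Complex.norm_exp_sub_one_sub_id_le (x := (x : ℂ) * Complex.I) (by rw [hn]; exact h)
    rw [hn, sq_abs] at this
    nlinarith [sq_nonneg x]
  · have h1 := Real.norm_exp_I_mul_ofReal_sub_one_le (x := x)
    rw [mul_comm, Real.norm_eq_abs] at h1
    have h2 := norm_sub_le (Complex.exp (x * Complex.I) - 1) (x * Complex.I)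
    rw [hn] at h2
    nlinarith [sq_abs x]

lemma conv_prob {μ : ℝ} (hμ : 2 ≤ μ) (ν₁ ν₂ : Measure ℝ) [IsProbabilityMeasure ν₁]
    [IsProbabilityMeasure ν₂] : IsProbabilityMeasure (kingmanConv μ ν₁ ν₂) := by
  have := bet_prob hμ
  rw [conv_eq hμ]
  exact Measure.isProbabilityMeasure_map kf_meas.aemeasurable

lemma pow_prob {μ : ℝ} (hμ : 2 ≤ μ) (ν : Measure ℝ) [IsProbabilityMeasure ν] (n : ℕ) :
    IsProbabilityMeasure (kingmanPow μ ν n) := by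
  induction n with
  | zero => unfold kingmanPow; infer_instance
  | succ k ih => unfold kingmanPow; exact conv_prob hμ _ _

lemma kf_sq {μ : ℝ} (hμ : 2 ≤ μ) (ν₁ ν₂ : Measure ℝ) [IsProbabilityMeasure ν₁]
    [IsProbabilityMeasure ν₂] : ∀ᵐ p ∂(ν₁.prod (ν₂.prod (bet μ))),
      kf p ^ 2 = p.1 ^ 2 + p.2.1 ^ 2 + 2 * p.1 * p.2.1 * p.2.2 := by
  have := bet_prob hμ
  have h1 : ∀ᵐ q ∂(ν₂.prod (bet μ)), q.2 ∈ Set.Icc (-1 : ℝ) 1 :=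
    Measure.quasiMeasurePreserving_snd.ae (bet_ae μ)
  have h2 : ∀ᵐ p ∂(ν₁.prod (ν₂.prod (bet μ))), p.2.2 ∈ Set.Icc (-1 : ℝ) 1 :=
    Measure.quasiMeasurePreserving_snd.ae h1
  filter_upwards [h2] with p hp
  unfold kf
  apply Real.sq_sqrt
  nlinarith [mul_nonneg (sub_nonneg.2 hp.2) (sq_nonneg (p.1 - p.2.1)),
    mul_nonneg (neg_le_iff_add_nonneg.1 hp.1) (sq_nonneg (p.1 + p.2.1))]

lemma int_of_sq {m : Measure ℝ} [IsProbabilityMeasure m] (h : Integrable (fun x => x ^ 2) m) :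
    Integrable (fun x : ℝ => x) m :=
  ((memLp_two_iff_integrable_sq (f := fun x : ℝ => x) (by fun_prop)).2 h).integrable (by norm_num)

lemma bet_int_sq {μ : ℝ} (hμ : 2 ≤ μ) : Integrable (fun v : ℝ => v ^ 2) (bet μ) := by
  have := bet_prob hμ
  apply Integrable.of_bound (C := 1) (by fun_prop)
  filter_upwards [bet_ae μ] with v hv
  rw [Real.norm_eq_abs, abs_of_nonneg (sq_nonneg _)]
  nlinarith [hv.1, hv.2]

lemma conv_moment {μ : ℝ} (hμ : 2 ≤ μ) (ν₁ ν₂ : Measure ℝ) [IsProbabilityMeasure ν₁]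
    [IsProbabilityMeasure ν₂] (h1 : Integrable (fun x => x ^ 2) ν₁)
    (h2 : Integrable (fun x => x ^ 2) ν₂) :
    Integrable (fun x => x ^ 2) (kingmanConv μ ν₁ ν₂) ∧
    ∫ x, x ^ 2 ∂(kingmanConv μ ν₁ ν₂) = ∫ x, x ^ 2 ∂ν₁ + ∫ x, x ^ 2 ∂ν₂ := by
  have := bet_prob hμ
  rw [conv_eq hμ]
  have hae := kf_sq hμ ν₁ ν₂
  have i1 : Integrable (fun p : ℝ × ℝ × ℝ => p.1 ^ 2) (ν₁.prod (ν₂.prod (bet μ))) :=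
    h1.comp_fst _
  have i2' : Integrable (fun p : ℝ × ℝ => p.1 ^ 2) (ν₂.prod (bet μ)) :=
    h2.comp_fst _
  have i2 : Integrable (fun p : ℝ × ℝ × ℝ => p.2.1 ^ 2) (ν₁.prod (ν₂.prod (bet μ))) :=
    i2'.comp_snd _
  have i3 : Integrable (fun p : ℝ × ℝ × ℝ => (2 * p.1) * (p.2.1 * p.2.2))
      (ν₁.prod (ν₂.prod (bet μ))) :=
    ((int_of_sq h1).const_mul 2).mul_prod ((int_of_sq h2).mul_prod (int_of_sq (bet_int_sq hμ)))
  have e : (fun p => kf p ^ 2) =ᵐ[ν₁.prod (ν₂.prod (bet μ))]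
      fun p => p.1 ^ 2 + p.2.1 ^ 2 + (2 * p.1) * (p.2.1 * p.2.2) := by
    filter_upwards [hae] with p hp
    rw [hp]; ring
  constructor
  · rw [integrable_map_measure (by fun_prop) kf_meas.aemeasurable]
    exact ((i1.add i2).add i3).congr e.symm
  · rw [integral_map kf_meas.aemeasurable (by fun_prop), integral_congr_ae e,
      integral_add (f := fun p : ℝ × ℝ × ℝ => p.1 ^ 2 + p.2.1 ^ 2) (i1.add i2) i3,
      integral_add i1 i2]
    rw [integral_prod_mul (fun r : ℝ => 2 * r) (fun q : ℝ × ℝ => q.1 * q.2),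
      integral_prod_mul (fun r : ℝ => r) (fun q : ℝ => q), bet_mean hμ]
    rw [integral_fun_fst (fun x : ℝ => x ^ 2),
      integral_fun_snd (fun q : ℝ × ℝ => q.1 ^ 2),
      integral_fun_fst (fun x : ℝ => x ^ 2)]
    simp

lemma pow_moment {μ : ℝ} (hμ : 2 ≤ μ) (ν : Measure ℝ) [IsProbabilityMeasure ν]
    (h : Integrable (fun x => x ^ 2) ν) (n : ℕ) :
    Integrable (fun x => x ^ 2) (kingmanPow μ ν n) ∧
    ∫ x, x ^ 2 ∂(kingmanPow μ ν n) = n * ∫ x, x ^ 2 ∂ν := by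
  induction n with
  | zero =>
    unfold kingmanPow
    exact ⟨integrable_dirac (by simp), by simp⟩
  | succ k ih =>
    have := pow_prob hμ ν k
    have h3 := conv_moment hμ ν (kingmanPow μ ν k) h ih.1
    unfold kingmanPow
    refine ⟨h3.1, ?_⟩
    rw [h3.2, ih.2]
    push_cast
    ring

noncomputable def EE (θ a : ℝ) (m : Measure ℝ) : ℂ :=
  ∫ t, Complex.exp ((θ * (t ^ 2 - a) : ℝ) * Complex.I) ∂m

lemma EE_norm (θ a : ℝ) (m : Measure ℝ) [IsProbabilityMeasure m] : ‖EE θ a m‖ ≤ 1 := by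
  unfold EE
  refine (norm_integral_le_integral_norm _).trans ?_
  simp only [Complex.norm_exp_ofReal_mul_I]
  simp

lemma step {μ : ℝ} (hμ : 2 ≤ μ) (ν₁ ν₂ : Measure ℝ) [IsProbabilityMeasure ν₁]
    [IsProbabilityMeasure ν₂] (h1 : Integrable (fun x => x ^ 2) ν₁)
    (h2 : Integrable (fun x => x ^ 2) ν₂) (θ a b : ℝ) :
    ‖EE θ (a + b) (kingmanConv μ ν₁ ν₂) - EE θ a ν₁ * EE θ b ν₂‖ ≤
      4 * θ ^ 2 * (∫ x, x ^ 2 ∂ν₁) * (∫ x, x ^ 2 ∂ν₂) / μ := by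
  have := bet_prob hμ
  have hae := kf_sq hμ ν₁ ν₂
  set T := ν₁.prod (ν₂.prod (bet μ)) with hT
  let G : ℝ → ℝ → ℂ := fun c t => Complex.exp ((θ * (t ^ 2 - c) : ℝ) * Complex.I)
  have hGm (c : ℝ) : Continuous (G c) := by unfold G; fun_prop
  have hGn (c t : ℝ) : ‖G c t‖ = 1 := Complex.norm_exp_ofReal_mul_I _
  have hG (c : ℝ) (m : Measure ℝ) [IsProbabilityMeasure m] : Integrable (G c) m :=
    Integrable.of_bound (C := 1) (hGm c).aestronglyMeasurable (ae_of_all _ fun t => (hGn c t).le)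
  have hGt (c : ℝ) (m : Measure ℝ) [IsProbabilityMeasure m]
      (h : Integrable (fun x => x ^ 2) m) : Integrable (fun t : ℝ => G c t * (t : ℂ)) m :=
    (int_of_sq h).ofReal.bdd_mul (c := 1) (hGm c).aestronglyMeasurable
      (ae_of_all _ fun t => (hGn c t).le)
  let A : ℝ × ℝ × ℝ → ℂ := fun p => G a p.1 * (G b p.2.1 * 1)
  let X : ℝ × ℝ × ℝ → ℝ := fun p => 2 * θ * p.1 * p.2.1 * p.2.2
  let B : ℝ × ℝ × ℝ → ℂ := fun p =>
    (G a p.1 * (p.1 : ℂ)) * ((G b p.2.1 * (p.2.1 : ℂ)) * (p.2.2 : ℂ))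
  let D : ℝ × ℝ × ℝ → ℂ := fun p => A p * Complex.exp (X p * Complex.I)
  have iA : Integrable A T :=
    (hG a ν₁).mul_prod ((hG b ν₂).mul_prod (integrable_const (1 : ℂ)))
  have iB : Integrable B T :=
    (hGt a ν₁ h1).mul_prod ((hGt b ν₂ h2).mul_prod (int_of_sq (bet_int_sq hμ)).ofReal)
  have iD : Integrable D T := by
    apply iA.mul_bdd (c := 1)
    · unfold X; fun_prop
    · exact ae_of_all _ fun p => (Complex.norm_exp_ofReal_mul_I _).le
  have eA : ∫ p, A p ∂T = EE θ a ν₁ * EE θ b ν₂ := by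
    rw [hT]
    unfold A
    rw [integral_prod_mul (fun r => G a r) (fun q : ℝ × ℝ => G b q.1 * 1),
      integral_prod_mul (fun r => G b r) (fun _ : ℝ => (1 : ℂ))]
    simp [EE, G]
  have hv0 : ∫ v : ℝ, (v : ℂ) ∂(bet μ) = 0 := by
    have h := integral_ofReal (𝕜 := ℂ) (μ := bet μ) (f := fun v : ℝ => v)
    rw [bet_mean hμ] at h
    simpa using h
  have eB : ∫ p, B p ∂T = 0 := by
    rw [hT]
    unfold B
    rw [integral_prod_mul (fun r => G a r * (r : ℂ))
        (fun q : ℝ × ℝ => (G b q.1 * (q.1 : ℂ)) * (q.2 : ℂ)),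
      integral_prod_mul (fun r => G b r * (r : ℂ)) (fun v : ℝ => (v : ℂ)),
      hv0]
    simp
  have eD : EE θ (a + b) (kingmanConv μ ν₁ ν₂) = ∫ p, D p ∂T := by
    rw [conv_eq hμ, EE, integral_map kf_meas.aemeasurable (by fun_prop)]
    apply integral_congr_ae
    filter_upwards [hae] with p hp
    simp only [hp, D, A, G, X, mul_one, ← Complex.exp_add]
    congr 1
    push_cast
    ring
  have key : EE θ (a + b) (kingmanConv μ ν₁ ν₂) - EE θ a ν₁ * EE θ b ν₂ =
      ∫ p, (D p - A p - (2 * θ * Complex.I) * B p) ∂T := by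
    rw [integral_sub (f := fun p => D p - A p) (iD.sub iA) (iB.const_mul _), integral_sub iD iA, integral_const_mul, eB, eA,
      eD]
    simp
  rw [key]
  have iQ : Integrable (fun p : ℝ × ℝ × ℝ => (8 * θ ^ 2) * (p.1 ^ 2 * (p.2.1 ^ 2 * p.2.2 ^ 2))) T :=
    (h1.mul_prod (h2.mul_prod (bet_int_sq hμ))).const_mul _
  refine (norm_integral_le_of_norm_le iQ (ae_of_all _ fun p => ?_)).trans (le_of_eq ?_)
  · have e : D p - A p - (2 * θ * Complex.I) * B p =
        G a p.1 * G b p.2.1 * (Complex.exp (X p * Complex.I) - 1 - X p * Complex.I) := by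
      simp only [D, A, B, X]
      push_cast
      ring
    rw [e, norm_mul, norm_mul, hGn, hGn, one_mul, one_mul]
    refine (exp_bd _).trans (le_of_eq ?_)
    simp only [X]
    ring
  · rw [integral_const_mul, hT, integral_prod_mul (fun r : ℝ => r ^ 2)
      (fun q : ℝ × ℝ => q.1 ^ 2 * q.2 ^ 2),
      integral_prod_mul (fun r : ℝ => r ^ 2) (fun v : ℝ => v ^ 2), bet_sq hμ]
    have : μ ≠ 0 := by linarith
    field_simp
    ring

lemma total {μ : ℝ} (hμ : 2 ≤ μ) (ν : Measure ℝ) [IsProbabilityMeasure ν]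
    (h : Integrable (fun x => x ^ 2) ν) (θ : ℝ) (n : ℕ) :
    ‖EE θ (n * ∫ x, x ^ 2 ∂ν) (kingmanPow μ ν n) - (EE θ (∫ x, x ^ 2 ∂ν) ν) ^ n‖ ≤
      4 * θ ^ 2 * (∫ x, x ^ 2 ∂ν) ^ 2 / μ * n ^ 2 := by
  induction n with
  | zero => simp [EE, kingmanPow]
  | succ k ih =>
    have := pow_prob hμ ν k
    have hm := pow_moment hμ ν h k
    set σ := ∫ x, x ^ 2 ∂ν with hσ
    have hs := step hμ ν (kingmanPow μ ν k) h hm.1 θ σ (k * σ)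
    rw [hm.2] at hs
    have e1 : ((k + 1 : ℕ) : ℝ) * σ = σ + k * σ := by push_cast; ring
    rw [e1]
    change ‖EE θ (σ + k * σ) (kingmanConv μ ν (kingmanPow μ ν k)) - _‖ ≤ _
    have e2 : EE θ (σ + k * σ) (kingmanConv μ ν (kingmanPow μ ν k)) - EE θ σ ν ^ (k + 1) =
      (EE θ (σ + k * σ) (kingmanConv μ ν (kingmanPow μ ν k))
        - EE θ σ ν * EE θ (k * σ) (kingmanPow μ ν k)) +
      EE θ σ ν * (EE θ (k * σ) (kingmanPow μ ν k) - EE θ σ ν ^ k) := by ring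
    rw [e2]
    refine (norm_add_le _ _).trans ?_
    rw [norm_mul]
    have h3 := mul_le_mul (EE_norm θ σ ν) ih (norm_nonneg _) zero_le_one
    have h4 : 0 ≤ 4 * θ ^ 2 * σ ^ 2 / μ := by
      have : 0 < μ := by linarith
      positivity
    have h5 : 4 * θ ^ 2 * σ * (k * σ) / μ = 4 * θ ^ 2 * σ ^ 2 / μ * k := by ring
    rw [h5] at hs
    push_cast
    have hk : (0 : ℝ) ≤ k := Nat.cast_nonneg k
    nlinarith [mul_nonneg h4 hk]

/-- CLT for Kingman random walks with `n²/μₙ → 0`: the law of `((S_n^{μ_n})² - nσ²)/√n`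
(where the law of `S_n^{μ_n}` is `ν^{(n,*_{μ_n})}`) converges in distribution to
`N(0, m₄(ν) - σ⁴)`. -/
theorem kingman_clt (ν : Measure ℝ) [IsProbabilityMeasure ν]
    (hν : ν (Set.Iio 0) = 0) (hm4int : Integrable (fun x => x ^ 4) ν)
    (σ2 m4 : ℝ) (hσ : σ2 = ∫ x, x ^ 2 ∂ν) (hm4 : m4 = ∫ x, x ^ 4 ∂ν)
    (μs : ℕ → ℝ) (hμs : ∀ n, μs n > 1 / 2)
    (hlim : Tendsto (fun n : ℕ => (n : ℝ) ^ 2 / μs n) atTop (nhds 0)) :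
    ∀ f : BoundedContinuousFunction ℝ ℝ,
      Tendsto
        (fun n : ℕ => ∫ t, f ((t ^ 2 - n * σ2) / Real.sqrt n) ∂(kingmanPow (μs n) ν n))
        atTop (nhds (∫ x, f x ∂(gaussianReal 0 (m4 - σ2 ^ 2).toNNReal))) := by
  have hm2 : Integrable (fun x => x ^ 2) ν := by
    refine (hm4int.add (integrable_const (1 : ℝ))).mono' (by fun_prop) (ae_of_all _ fun x => ?_)
    rw [Real.norm_eq_abs, abs_of_nonneg (sq_nonneg _)]
    change x ^ 2 ≤ x ^ 4 + 1
    nlinarith [sq_nonneg (x ^ 2 - 1), sq_nonneg (x ^ 2)]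
  let μ' : ℕ → ℝ := fun n => max (μs n) 2
  have hμ' (n : ℕ) : 2 ≤ μ' n := le_max_right _ _
  have hev : ∀ᶠ n in atTop, μ' n = μs n := by
    filter_upwards [hlim.eventually_lt_const (by norm_num : (0 : ℝ) < 1 / 2),
      eventually_ge_atTop 1] with n hn h1
    have hp : 0 < μs n := by have := hμs n; linarith
    rw [div_lt_iff₀ hp] at hn
    have h1' : (1 : ℝ) ≤ n := by exact_mod_cast h1
    exact max_eq_left (by nlinarith)
  have hlim' : Tendsto (fun n : ℕ => (n : ℝ) ^ 2 / μ' n) atTop (nhds 0) := by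
    refine hlim.congr' ?_
    filter_upwards [hev] with n hn
    rw [hn]
  -- iid variables
  obtain ⟨Ω, mΩ, P, X, hXm, hXl, hXi, hP⟩ := exists_iid ℕ ν
  let g : ℝ → ℝ := fun x => x ^ 2 - σ2
  have hgm : Measurable g := by unfold g; fun_prop
  let Y : ℕ → Ω → ℝ := fun k => g ∘ X k
  have hYi : iIndepFun Y P := hXi.comp (fun _ => g) (fun _ => hgm)
  have hYid (i : ℕ) : IdentDistrib (Y i) (Y 0) P P :=
    ((hXl i).identDistrib (hXl 0)).comp hgm
  have hgint : Integrable (fun x => g x ^ 2) ν := by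
    have : (fun x => g x ^ 2) = fun x => x ^ 4 - 2 * σ2 * x ^ 2 + σ2 ^ 2 := by
      funext x; simp only [g]; ring
    rw [this]
    exact (hm4int.sub (hm2.const_mul _)).add (integrable_const _)
  have hg2 : MemLp g 2 ν := (memLp_two_iff_integrable_sq hgm.aestronglyMeasurable).2 hgint
  have hg0 : ∫ x, g x ∂ν = 0 := by
    simp only [g]
    rw [integral_sub hm2 (integrable_const _), ← hσ]
    simp
  have hgv : ∫ x, g x ^ 2 ∂ν = m4 - σ2 ^ 2 := by
    have : (fun x => g x ^ 2) = fun x => x ^ 4 - 2 * σ2 * x ^ 2 + σ2 ^ 2 := by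
      funext x; simp only [g]; ring
    rw [this, integral_add (f := fun x => x ^ 4 - 2 * σ2 * x ^ 2)
      (hm4int.sub (hm2.const_mul _)) (integrable_const _),
      integral_sub hm4int (hm2.const_mul _), integral_const_mul, ← hσ, ← hm4]
    simp
    ring
  have hY0 : P[Y 0] = 0 := by
    rw [← hg0]
    exact (hXl 0).integral_comp hgm.aestronglyMeasurable
  have hYL : MemLp (Y 0) 2 P := by
    apply MemLp.comp_of_map _ (hXm 0).aemeasurable
    rw [(hXl 0).map_eq]
    exact hg2
  have hYv : Var[Y 0; P] = m4 - σ2 ^ 2 := by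
    rw [variance_eq_sub hYL, hY0, ← hgv]
    have := (hXl 0).integral_comp (f := fun x => g x ^ 2) (by fun_prop)
    rw [← this]
    simp [Y, Function.comp_def]
  have hclt := tendstoInDistribution_inv_sqrt_mul_sum_sub (X := Y) (P := P) (Y := id)
    (P' := gaussianReal 0 (m4 - σ2 ^ 2).toNNReal) (by rw [hYv]; exact HasLaw.id) hYL hYi hYid
  have hcf := ProbabilityMeasure.tendsto_iff_tendsto_charFun.1 hclt.tendsto
  simp only [hY0, mul_zero, sub_zero, ProbabilityMeasure.coe_mk, Measure.map_id,
    charFun_inv_sqrt_mul_sum hYi hYid] at hcf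
  have hcY (θ : ℝ) : charFun (P.map (Y 0)) θ = EE θ σ2 ν := by
    have e : P.map (Y 0) = ν.map g := by
      rw [← (hXl 0).map_eq, Measure.map_map hgm (hXm 0)]
    rw [e, charFun_apply_real, integral_map hgm.aemeasurable (by fun_prop)]
    simp [EE, g]
  simp only [hcY] at hcf
  -- the laws
  have hpr (n : ℕ) := pow_prob (hμ' n) ν n
  let F : ℕ → ℝ → ℝ := fun n t => (t ^ 2 - n * σ2) / Real.sqrt n
  have hF (n : ℕ) : Measurable (F n) := by unfold F; fun_prop
  let M : ℕ → ProbabilityMeasure ℝ := fun n =>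
    ⟨(kingmanPow (μ' n) ν n).map (F n), Measure.isProbabilityMeasure_map (hF n).aemeasurable⟩
  let N : ProbabilityMeasure ℝ := ⟨gaussianReal 0 (m4 - σ2 ^ 2).toNNReal, inferInstance⟩
  have hMc (n : ℕ) (θ : ℝ) : charFun (M n : Measure ℝ) θ =
      EE ((Real.sqrt n)⁻¹ * θ) (n * σ2) (kingmanPow (μ' n) ν n) := by
    simp only [M, ProbabilityMeasure.coe_mk]
    rw [charFun_apply_real, integral_map (hF n).aemeasurable (by fun_prop), EE]
    congr 1
    funext t
    congr 1
    simp only [F]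
    push_cast
    ring
  have hMN : Tendsto M atTop (nhds N) := by
    rw [ProbabilityMeasure.tendsto_iff_tendsto_charFun]
    intro θ
    simp only [hMc]
    have hd : Tendsto (fun n : ℕ => EE ((Real.sqrt n)⁻¹ * θ) (n * σ2) (kingmanPow (μ' n) ν n)
        - EE ((Real.sqrt n)⁻¹ * θ) σ2 ν ^ n) atTop (nhds 0) := by
      have hb : Tendsto (fun n : ℕ => 4 * θ ^ 2 * σ2 ^ 2 * ((n : ℝ) ^ 2 / μ' n)) atTop
          (nhds 0) := by
        simpa using hlim'.const_mul (4 * θ ^ 2 * σ2 ^ 2)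
      refine squeeze_zero_norm' ?_ hb
      filter_upwards [eventually_ge_atTop 1] with n hn
      have ht := total (hμ' n) ν hm2 ((Real.sqrt n)⁻¹ * θ) n
      rw [← hσ] at ht
      refine ht.trans ?_
      have hn' : (1 : ℝ) ≤ n := by exact_mod_cast hn
      have hi : ((Real.sqrt n)⁻¹) ^ 2 ≤ 1 := by
        rw [inv_pow, Real.sq_sqrt (by linarith)]
        exact inv_le_one_of_one_le₀ hn'
      have hp : 0 < μ' n := by have := hμ' n; linarith
      have e1 : 4 * ((Real.sqrt n)⁻¹ * θ) ^ 2 * σ2 ^ 2 / μ' n * (n : ℝ) ^ 2 =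
        ((Real.sqrt n)⁻¹) ^ 2 * (4 * θ ^ 2 * σ2 ^ 2 * ((n : ℝ) ^ 2 / μ' n)) := by ring
      rw [e1]
      exact mul_le_of_le_one_left (by positivity) hi
    have := hd.add (hcf θ)
    simpa [N] using this
  intro f
  have hfin := ProbabilityMeasure.tendsto_iff_forall_integral_tendsto.1 hMN f
  refine hfin.congr' ?_
  filter_upwards [hev] with n hn
  simp only [M, ProbabilityMeasure.coe_mk]
  rw [integral_map (hF n).aemeasurable f.continuous.aestronglyMeasurable, hn]
end

section
/- Let $x \ge 0$, $\mu_n \to \infty$, and let $(S_n^{\mu_n})$ be the Kingman random walk of index $\mu_n$ with step law $\delta_x$. Let $(a_n)$ be an increasing positive sequence with $n^{3/2}/(a_n\sqrt{\mu_n}) \to 0$. Then $((S_n^{\mu_n})^2 - nx^2)/a_n \to 0$ in probability. -/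
open MeasureTheory Filter ProbabilityTheory

lemma kw_cont (p : ℝ) (hp : 0 ≤ p) : Continuous (fun v : ℝ => (1 - v ^ 2) ^ p) :=
  (by fun_prop : Continuous fun v : ℝ => 1 - v ^ 2).rpow_const (fun _ => Or.inr hp)

lemma kw_deriv (p : ℝ) (hp : 0 ≤ p) (v : ℝ) :
    HasDerivAt (fun v : ℝ => (1 - v ^ 2) ^ (p + 1)) (-2 * (p + 1) * v * (1 - v ^ 2) ^ p) v := by
  have h1 : HasDerivAt (fun v : ℝ => 1 - v ^ 2) (-(2 * v)) v := by
    simpa using (hasDerivAt_pow 2 v).const_sub 1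
  have := h1.rpow_const (p := p + 1) (Or.inr (by linarith))
  convert this using 1
  simp only [add_sub_cancel_right]
  ring

lemma kw_int1 (p : ℝ) (hp : 0 ≤ p) : ∫ v in (-1 : ℝ)..1, v * (1 - v ^ 2) ^ p = 0 := by
  have h := intervalIntegral.integral_eq_sub_of_hasDerivAt (a := -1) (b := 1)
    (fun v _ => kw_deriv p hp v)
    (((by fun_prop : Continuous fun v : ℝ => -2 * (p + 1) * v).mul
      (kw_cont p hp)).intervalIntegrable _ _)
  have e : ∀ v : ℝ, -2 * (p + 1) * v * (1 - v ^ 2) ^ p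
      = (-2 * (p + 1)) * (v * (1 - v ^ 2) ^ p) := fun v => by ring
  simp only [e, intervalIntegral.integral_const_mul] at h
  norm_num at h
  rcases h with h | h
  · linarith
  · exact h

lemma kw_int2 (p : ℝ) (hp : 0 ≤ p) :
    (2 * p + 3) * ∫ v in (-1 : ℝ)..1, v ^ 2 * (1 - v ^ 2) ^ p
      = ∫ v in (-1 : ℝ)..1, (1 - v ^ 2) ^ p := by
  have hc := kw_cont p hp
  have hd : ∀ v ∈ Set.uIcc (-1 : ℝ) 1, HasDerivAt (fun v : ℝ => v * (1 - v ^ 2) ^ (p + 1))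
      ((1 - v ^ 2) ^ p - (2 * p + 3) * (v ^ 2 * (1 - v ^ 2) ^ p)) v := by
    intro v hv
    rw [Set.uIcc_of_le (by norm_num)] at hv
    have h := (hasDerivAt_id v).mul (kw_deriv p hp v)
    have h0 : 0 ≤ 1 - v ^ 2 := by nlinarith [hv.1, hv.2]
    have e : (1 - v ^ 2) ^ (p + 1) = (1 - v ^ 2) ^ p * (1 - v ^ 2) := by
      rw [Real.rpow_add_of_nonneg h0 hp (by norm_num), Real.rpow_one]
    refine h.congr_deriv ?_
    rw [e]
    simp only [id]
    ring
  have i1 : IntervalIntegrable (fun v : ℝ => (1 - v ^ 2) ^ p) volume (-1) 1 :=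
    hc.intervalIntegrable _ _
  have i2 : IntervalIntegrable (fun v : ℝ => (2 * p + 3) * (v ^ 2 * (1 - v ^ 2) ^ p))
      volume (-1) 1 :=
    (continuous_const.mul ((continuous_pow 2).mul hc)).intervalIntegrable _ _
  have h := intervalIntegral.integral_eq_sub_of_hasDerivAt hd (i1.sub i2)
  rw [intervalIntegral.integral_sub i1 i2, intervalIntegral.integral_const_mul] at h
  have z : (0 : ℝ) ^ (p + 1) = 0 := Real.zero_rpow (by linarith)
  norm_num [z] at h
  linarith

lemma kw_kappa (μ : ℝ) : kappa μ = ∫ v in (-1 : ℝ)..1, (1 - v ^ 2) ^ (μ - 3 / 2) := by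
  rw [kappa, integral_Icc_eq_integral_Ioc, intervalIntegral.integral_of_le (by norm_num)]

lemma kw_kappa_pos (μ : ℝ) (hμ : 3 / 2 ≤ μ) : 0 < kappa μ := by
  rw [kw_kappa]
  apply intervalIntegral.intervalIntegral_pos_of_pos_on
  · exact (kw_cont _ (by linarith)).intervalIntegrable _ _
  · intro v hv
    exact Real.rpow_pos_of_pos (by nlinarith [hv.1, hv.2]) _
  · norm_num

lemma kw_poly (μ : ℝ) (hμ : 3 / 2 ≤ μ) (A B C : ℝ) :
    ∫ v in Set.Icc (-1 : ℝ) 1, (1 - v ^ 2) ^ (μ - 3 / 2) * (A + B * v + C * v ^ 2)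
      = kappa μ * (A + C / (2 * μ)) := by
  have hp : 0 ≤ μ - 3 / 2 := by linarith
  have hc := kw_cont _ hp
  rw [integral_Icc_eq_integral_Ioc, ← intervalIntegral.integral_of_le (by norm_num)]
  have e : ∀ v : ℝ, (1 - v ^ 2) ^ (μ - 3 / 2) * (A + B * v + C * v ^ 2)
    = A * (1 - v ^ 2) ^ (μ - 3 / 2) + B * (v * (1 - v ^ 2) ^ (μ - 3 / 2))
      + C * (v ^ 2 * (1 - v ^ 2) ^ (μ - 3 / 2)) := fun v => by ring
  simp only [e]
  have c1 : Continuous fun v : ℝ => A * (1 - v ^ 2) ^ (μ - 3 / 2) := continuous_const.mul hc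
  have c2 : Continuous fun v : ℝ => B * (v * (1 - v ^ 2) ^ (μ - 3 / 2)) :=
    continuous_const.mul (continuous_id.mul hc)
  have c3 : Continuous fun v : ℝ => C * (v ^ 2 * (1 - v ^ 2) ^ (μ - 3 / 2)) :=
    continuous_const.mul ((continuous_pow 2).mul hc)
  have c12 : Continuous fun v : ℝ =>
      A * (1 - v ^ 2) ^ (μ - 3 / 2) + B * (v * (1 - v ^ 2) ^ (μ - 3 / 2)) := c1.add c2
  rw [intervalIntegral.integral_add (c12.intervalIntegrable _ _)
      (c3.intervalIntegrable _ _),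
    intervalIntegral.integral_add (c1.intervalIntegrable _ _) (c2.intervalIntegrable _ _)]
  simp only [intervalIntegral.integral_const_mul]
  rw [kw_int1 _ hp, kw_kappa, ← kw_int2 _ hp]
  have : μ ≠ 0 := by linarith
  field_simp
  ring

lemma kw_kernel_lintegral (μ : ℝ) (hμ : 3 / 2 ≤ μ) (r s : ℝ) (g : ℝ → ℝ) (hg : Measurable g)
    (A B C : ℝ) (h0 : ∀ v ∈ Set.Icc (-1 : ℝ) 1, 0 ≤ A + B * v + C * v ^ 2)
    (h : ∀ v ∈ Set.Icc (-1 : ℝ) 1,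
      g (Real.sqrt (r ^ 2 + s ^ 2 + 2 * r * s * v)) = A + B * v + C * v ^ 2) :
    ∫⁻ t, ENNReal.ofReal (g t) ∂(kingmanKernel μ r s) = ENNReal.ofReal (A + C / (2 * μ)) := by
  have hc := kw_cont (μ - 3 / 2) (by linarith)
  have hk := kw_kappa_pos μ hμ
  have hm : Measurable fun v : ℝ => Real.sqrt (r ^ 2 + s ^ 2 + 2 * r * s * v) := by fun_prop
  have hgm : Measurable fun v : ℝ => ENNReal.ofReal
      (g (Real.sqrt (r ^ 2 + s ^ 2 + 2 * r * s * v))) := (hg.comp hm).ennreal_ofReal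
  rw [kingmanKernel, lintegral_smul_measure, lintegral_map hg.ennreal_ofReal hm,
    lintegral_withDensity_eq_lintegral_mul _ hc.measurable.ennreal_ofReal
      hgm]
  have e : ∫⁻ v in Set.Icc (-1 : ℝ) 1, ((fun v : ℝ => ENNReal.ofReal ((1 - v ^ 2) ^ (μ - 3 / 2))) *
      fun v => ENNReal.ofReal (g (Real.sqrt (r ^ 2 + s ^ 2 + 2 * r * s * v)))) v
      = ENNReal.ofReal (kappa μ * (A + C / (2 * μ))) := by
    rw [← kw_poly μ hμ A B C, ofReal_integral_eq_lintegral_ofReal]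
    · refine setLIntegral_congr_fun measurableSet_Icc fun v hv => ?_
      have : 0 ≤ 1 - v ^ 2 := by nlinarith [hv.1, hv.2]
      simp only [Pi.mul_apply]
      rw [h v hv, ENNReal.ofReal_mul (Real.rpow_nonneg this _)]
    · exact (hc.mul (by fun_prop)).continuousOn.integrableOn_compact isCompact_Icc
    · refine (ae_restrict_iff' measurableSet_Icc).2 (Eventually.of_forall fun v hv => ?_)
      have : 0 ≤ 1 - v ^ 2 := by nlinarith [hv.1, hv.2]
      exact mul_nonneg (Real.rpow_nonneg this _) (h0 v hv)
  rw [e, ENNReal.ofReal_mul hk.le, smul_eq_mul, ← mul_assoc, ENNReal.inv_mul_cancel, one_mul]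
  · simpa using hk
  · exact ENNReal.ofReal_ne_top

lemma kw_arg_nonneg (r s v : ℝ) (hv : v ∈ Set.Icc (-1 : ℝ) 1) :
    0 ≤ r ^ 2 + s ^ 2 + 2 * r * s * v := by
  have h1 : 0 ≤ 1 - v ^ 2 := by nlinarith [hv.1, hv.2]
  nlinarith [sq_nonneg (r + s * v), mul_nonneg (sq_nonneg s) h1]

lemma kw_kernel_meas (μ : ℝ) (hμ : 3 / 2 ≤ μ) (r : ℝ) : Measurable (kingmanKernel μ r) := by
  refine Measure.measurable_of_measurable_coe _ fun S hS => ?_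
  have hm : ∀ s, Measurable fun v : ℝ => Real.sqrt (r ^ 2 + s ^ 2 + 2 * r * s * v) :=
    fun s => by fun_prop
  simp only [kingmanKernel, Measure.smul_apply, smul_eq_mul]
  refine Measurable.const_mul ?_ _
  have hma := fun s => Measure.map_apply (μ := (volume.restrict (Set.Icc (-1 : ℝ) 1)).withDensity
        fun v => ENNReal.ofReal ((1 - v ^ 2) ^ (μ - 3 / 2))) (hm s) hS
  rw [funext hma]
  have h2 : Measurable fun q : ℝ × ℝ =>
    Real.sqrt (r ^ 2 + q.1 ^ 2 + 2 * r * q.1 * q.2) := by fun_prop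
  exact measurable_measure_prodMk_left (h2 hS)

lemma kw_step (μ : ℝ) (hμ : 3 / 2 ≤ μ) (x : ℝ) (n : ℕ) (f : ℝ → ENNReal) (hf : Measurable f) :
    ∫⁻ t, f t ∂(kingmanPow μ (Measure.dirac x) (n + 1))
      = ∫⁻ s, ∫⁻ t, f t ∂(kingmanKernel μ x s) ∂(kingmanPow μ (Measure.dirac x) n) := by
  have e : kingmanPow μ (Measure.dirac x) (n + 1)
      = (kingmanPow μ (Measure.dirac x) n).bind (kingmanKernel μ x) := by
    rw [kingmanPow, kingmanConv]
    have : (fun r => (kingmanPow μ (Measure.dirac x) n).bind fun s => kingmanKernel μ r s)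
        =ᵐ[Measure.dirac x]
        fun _ => (kingmanPow μ (Measure.dirac x) n).bind (kingmanKernel μ x) := by
      rw [Filter.EventuallyEq, ae_dirac_eq]
      rfl
    rw [Measure.bind, Measure.map_congr this]
    exact Measure.dirac_bind measurable_const x
  rw [e, Measure.lintegral_bind (kw_kernel_meas μ hμ x).aemeasurable hf.aemeasurable]

lemma kw_mass (μ : ℝ) (hμ : 3 / 2 ≤ μ) (x : ℝ) (n : ℕ) :
    ∫⁻ _, 1 ∂(kingmanPow μ (Measure.dirac x) n) = 1 := by
  induction n with
  | zero => simp [kingmanPow]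
  | succ n ih =>
    rw [kw_step μ hμ x n _ measurable_const]
    refine (lintegral_congr fun s => ?_).trans ih
    have := kw_kernel_lintegral μ hμ x s (fun _ => 1) measurable_const 1 0 0 (by simp) (by simp)
    simpa using this

lemma kw_m1 (μ : ℝ) (hμ : 3 / 2 ≤ μ) (x : ℝ) (n : ℕ) :
    ∫⁻ t, ENNReal.ofReal (t ^ 2) ∂(kingmanPow μ (Measure.dirac x) n)
      = ENNReal.ofReal (n * x ^ 2) := by
  induction n with
  | zero => simp [kingmanPow]
  | succ n ih =>
    rw [kw_step μ hμ x n _ (by fun_prop)]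
    have : ∀ s, ∫⁻ t, ENNReal.ofReal (t ^ 2) ∂(kingmanKernel μ x s)
        = ENNReal.ofReal (x ^ 2) * 1 + ENNReal.ofReal (s ^ 2) := by
      intro s
      rw [kw_kernel_lintegral μ hμ x s (fun t => t ^ 2) (by fun_prop) (x ^ 2 + s ^ 2)
        (2 * x * s) 0, mul_one, ← ENNReal.ofReal_add (by positivity) (by positivity)]
      · simp
      · intro v hv
        simpa using kw_arg_nonneg x s v hv
      · intro v hv
        simp [Real.sq_sqrt (kw_arg_nonneg x s v hv)]
    simp only [this]
    rw [lintegral_add_left (by fun_prop), lintegral_const_mul _ (by fun_prop), kw_mass μ hμ, ih,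
      mul_one, ← ENNReal.ofReal_add (by positivity) (by positivity)]
    push_cast
    ring_nf

lemma kw_m2 (μ : ℝ) (hμ : 3 / 2 ≤ μ) (x : ℝ) (n : ℕ) :
    ∫⁻ t, ENNReal.ofReal ((t ^ 2 - n * x ^ 2) ^ 2) ∂(kingmanPow μ (Measure.dirac x) n)
      ≤ ENNReal.ofReal (n ^ 2 * x ^ 4 / μ) := by
  have hμ0 : 0 < μ := by linarith
  induction n with
  | zero => simp [kingmanPow]
  | succ n ih =>
    rw [kw_step μ hμ x n _ (by fun_prop)]
    have : ∀ s, ∫⁻ t, ENNReal.ofReal ((t ^ 2 - (n + 1 : ℕ) * x ^ 2) ^ 2) ∂(kingmanKernel μ x s)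
        = ENNReal.ofReal ((s ^ 2 - n * x ^ 2) ^ 2)
          + ENNReal.ofReal (2 * x ^ 2 / μ) * ENNReal.ofReal (s ^ 2) := by
      intro s
      rw [kw_kernel_lintegral μ hμ x s (fun t => (t ^ 2 - (n + 1 : ℕ) * x ^ 2) ^ 2) (by fun_prop)
        ((s ^ 2 - n * x ^ 2) ^ 2)
        (4 * (s ^ 2 - n * x ^ 2) * x * s) (4 * x ^ 2 * s ^ 2),
        ← ENNReal.ofReal_mul (by positivity), ← ENNReal.ofReal_add (by positivity) (by positivity)]
      · congr 1
        field_simp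
        ring
      · intro v hv
        nlinarith [sq_nonneg (s ^ 2 - n * x ^ 2 + 2 * x * s * v)]
      · intro v hv
        simp only [Real.sq_sqrt (kw_arg_nonneg x s v hv)]
        push_cast
        ring
    simp only [this]
    rw [lintegral_add_left (by fun_prop), lintegral_const_mul _ (by fun_prop), kw_m1 μ hμ]
    refine (add_le_add_left ih _).trans ?_
    rw [← ENNReal.ofReal_mul (by positivity), ← ENNReal.ofReal_add (by positivity) (by positivity)]
    apply ENNReal.ofReal_le_ofReal
    have : ((n + 1 : ℕ) : ℝ) ^ 2 * x ^ 4 / μ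
      = n ^ 2 * x ^ 4 / μ + 2 * x ^ 2 / μ * (n * x ^ 2) + x ^ 4 / μ := by
      push_cast
      field_simp
      ring
    rw [this]
    have : 0 ≤ x ^ 4 / μ := by positivity
    linarith

/-- Weak law for Kingman random walks with point step law `δ_x`:
if `n^{3/2}/(aₙ√μₙ) → 0` then `((S_n^{μ_n})² - nx²)/aₙ → 0` in probability. -/
theorem kingman_weak_law (x : ℝ) (hx : 0 ≤ x)
    (μs : ℕ → ℝ) (hμs : ∀ n, μs n > 1 / 2) (hμinf : Tendsto μs atTop atTop)
    (a : ℕ → ℝ) (ha : ∀ n, 0 < a n) (hmono : Monotone a)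
    (hlim : Tendsto (fun n : ℕ => (n : ℝ) ^ ((3 : ℝ) / 2) / (a n * Real.sqrt (μs n)))
      atTop (nhds 0)) :
    ∀ ε > (0 : ℝ),
      Tendsto
        (fun n : ℕ => kingmanPow (μs n) (Measure.dirac x) n
          {t : ℝ | ε ≤ |(t ^ 2 - n * x ^ 2) / a n|})
        atTop (nhds 0) := by
  intro ε hε
  have hl : Tendsto (fun n : ℕ => ENNReal.ofReal (x ^ 4 / ε ^ 2 *
      ((n : ℝ) ^ ((3 : ℝ) / 2) / (a n * Real.sqrt (μs n))) ^ 2)) atTop (nhds 0) := by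
    have := ENNReal.tendsto_ofReal ((hlim.pow 2).const_mul (x ^ 4 / ε ^ 2))
    simpa using this
  refine tendsto_of_tendsto_of_tendsto_of_le_of_le' tendsto_const_nhds hl
    (Eventually.of_forall fun _ => zero_le) ?_
  filter_upwards [hμinf.eventually_ge_atTop (3 / 2), eventually_ge_atTop 1] with n hμ hn
  have han := ha n
  have hμ0 : 0 < μs n := by linarith
  have hn1 : (1 : ℝ) ≤ n := by exact_mod_cast hn
  have hsub : {t : ℝ | ε ≤ |(t ^ 2 - n * x ^ 2) / a n|}
      ⊆ {t : ℝ | ENNReal.ofReal ((ε * a n) ^ 2) ≤ ENNReal.ofReal ((t ^ 2 - n * x ^ 2) ^ 2)} := by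
    intro t ht
    simp only [Set.mem_ofPred_eq] at ht ⊢
    apply ENNReal.ofReal_le_ofReal
    rw [abs_div, abs_of_pos han, le_div_iff₀ han] at ht
    rw [← sq_abs (t ^ 2 - _)]
    gcongr
  refine (measure_mono hsub).trans ?_
  refine (meas_ge_le_lintegral_div (by fun_prop) ?_ ENNReal.ofReal_ne_top).trans ?_
  · simp only [ne_eq, ENNReal.ofReal_eq_zero, not_le]
    positivity
  refine (ENNReal.div_le_div_right (kw_m2 _ hμ x n) _).trans ?_
  rw [← ENNReal.ofReal_div_of_pos (by positivity)]
  apply ENNReal.ofReal_le_ofReal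
  have e : ((n : ℝ) ^ ((3 : ℝ) / 2)) ^ 2 = (n : ℝ) ^ 3 := by
    rw [← Real.rpow_natCast, ← Real.rpow_mul (by positivity), ← Real.rpow_natCast]
    norm_num
  rw [div_pow, mul_pow (a n), Real.sq_sqrt hμ0.le, e]
  have h3 : (n : ℝ) ^ 2 ≤ (n : ℝ) ^ 3 := pow_le_pow_right₀ hn1 (by norm_num)
  calc (n : ℝ) ^ 2 * x ^ 4 / μs n / (ε * a n) ^ 2
      = x ^ 4 / ε ^ 2 * ((n : ℝ) ^ 2 / (a n ^ 2 * μs n)) := by field_simp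
    _ ≤ _ := by gcongr
end
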